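/- Let d ≥ 0 be an integer, let (f_j)_{j≥1} be real numbers in [0,1], and let (δ_j)_{j≥1} be probability distributions on the nonnegative integers satisfying δ_j({x > d}) = 0 for all j. Define the delayed composite observation x_t = Σ_{j=1}^t f_j·δ_j({t − j}) for t ≥ 1. Then for every a ≥ 1 and m ≥ 1, with b = a + m − 1, | Σ_{t=a}^{b} x_t − Σ_{t=a}^{b} f_t | ≤ 2d. -/

import Mathlib

open Finset

/-- The tail probability `p({x ≥ s})` of a distribution `p` on the nonnegative integers. -/
noncomputable def tailProb (p : ℕ → ℝ) (s : ℕ) : ℝ :=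
  ∑' x : ℕ, if s ≤ x then p x else 0

/- Let `r n` be the reward generated by time `n` but observed only later. Each time step adds the
newly generated reward to this pool and removes the observed one, so the error over the window
telescopes to `r (a - 1) - r b`. Only the last `d` generated rewards can still be pending, hence
`0 ≤ r n ≤ d`, and two numbers in `[0, d]` differ by at most `d`: the factor `2` is not needed. -/

section TailProb

variable {p : ℕ → ℝ}

theorem tailProb_zero (p : ℕ → ℝ) : tailProb p 0 = ∑' x, p x := by
  simp only [tailProb, zero_le, if_true]

theorem tailProb_nonneg (hp : ∀ x, 0 ≤ p x) (s : ℕ) : 0 ≤ tailProb p s :=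
  tsum_nonneg fun x => by
    split_ifs
    exacts [hp x, le_rfl]

theorem sum_range_add_tailProb (hp : Summable p) (s : ℕ) :
    ∑ x ∈ range s, p x + tailProb p s = ∑' x, p x := by
  have tail_eq : tailProb p s = ∑' x : ((range s : Set ℕ)ᶜ : Set ℕ), p x := by
    rw [_root_.tsum_subtype, tailProb]
    exact tsum_congr fun x => by simp [Set.indicator_apply]
  rw [tail_eq, hp.sum_add_tsum_compl]

theorem add_tailProb_succ (hp : Summable p) (s : ℕ) :
    p s + tailProb p (s + 1) = tailProb p s := by
  have split_at_succ := sum_range_add_tailProb hp (s + 1)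
  rw [sum_range_succ] at split_at_succ
  linarith [sum_range_add_tailProb hp s]

theorem tailProb_antitone (hp : ∀ x, 0 ≤ p x) (hs : Summable p) : Antitone (tailProb p) :=
  antitone_nat_of_succ_le fun s => by linarith [hp s, add_tailProb_succ hs s]

theorem tailProb_le_tsum (hp : ∀ x, 0 ≤ p x) (hs : Summable p) (s : ℕ) :
    tailProb p s ≤ ∑' x, p x :=
  (tailProb_antitone hp hs s.zero_le).trans_eq (tailProb_zero p)

end TailProb

/-- The composite observation at time `t` of rewards `f 1, …, f t`, where the reward generated at
time `j` is spread over later times according to the delay distribution `δ j`. -/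
def compositeObservation (f : ℕ → ℝ) (δ : ℕ → ℕ → ℝ) (t : ℕ) : ℝ :=
  ∑ j ∈ Icc 1 t, f j * δ j (t - j)

/-- The part of the rewards generated at times `1, …, n` that is observed only after time `n`:
a delay of at least `n - j + 1` carries the reward generated at time `j` past time `n`. -/
noncomputable def pendingReward (f : ℕ → ℝ) (δ : ℕ → ℕ → ℝ) (n : ℕ) : ℝ :=
  ∑ j ∈ Icc 1 n, f j * tailProb (δ j) (n - j + 1)

section PendingReward

variable {f : ℕ → ℝ} {δ : ℕ → ℕ → ℝ}

theorem compositeObservation_add_pendingReward_succ (hsum : ∀ j, HasSum (δ j) 1) (n : ℕ) :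
    compositeObservation f δ (n + 1) + pendingReward f δ (n + 1)
      = f (n + 1) + pendingReward f δ n :=
  calc compositeObservation f δ (n + 1) + pendingReward f δ (n + 1)
      = ∑ j ∈ Icc 1 (n + 1), f j * tailProb (δ j) (n + 1 - j) := by
        simp only [compositeObservation, pendingReward, ← sum_add_distrib, ← mul_add,
          add_tailProb_succ (hsum _).summable]
    _ = ∑ j ∈ Icc 1 n, f j * tailProb (δ j) (n + 1 - j) + f (n + 1) := by
        rw [sum_Icc_succ_top (by lia), Nat.sub_self, tailProb_zero, (hsum _).tsum_eq, mul_one]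
    _ = f (n + 1) + pendingReward f δ n := by
        rw [add_comm, pendingReward]
        congr 1
        exact sum_congr rfl fun j hj => by rw [Nat.sub_add_comm (mem_Icc.mp hj).2]

theorem sum_Ioc_compositeObservation_sub_sum (hsum : ∀ j, HasSum (δ j) 1) {k n : ℕ}
    (hkn : k ≤ n) :
    ∑ t ∈ Ioc k n, compositeObservation f δ t - ∑ t ∈ Ioc k n, f t
      = pendingReward f δ k - pendingReward f δ n := by
  induction n, hkn using Nat.le_induction with
  | base => simp
  | succ n hkn ih =>
    rw [sum_Ioc_succ_top hkn, sum_Ioc_succ_top hkn]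
    linarith [compositeObservation_add_pendingReward_succ (f := f) hsum n]

theorem pendingReward_nonneg (hf : ∀ j, 0 ≤ f j) (hnn : ∀ j x, 0 ≤ δ j x) (n : ℕ) :
    0 ≤ pendingReward f δ n :=
  sum_nonneg fun j _ => mul_nonneg (hf j) (tailProb_nonneg (hnn j) _)

theorem pendingReward_eq_sum_Ioc {d : ℕ} (hnn : ∀ j x, 0 ≤ δ j x) (hs : ∀ j, Summable (δ j))
    (hbd : ∀ j, tailProb (δ j) (d + 1) = 0) (n : ℕ) :
    pendingReward f δ n = ∑ j ∈ Ioc (n - d) n, f j * tailProb (δ j) (n - j + 1) := by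
  refine (sum_subset (fun j => by simp only [mem_Ioc, mem_Icc]; lia) fun j hj hj' => ?_).symm
  have delay_lt : d + 1 ≤ n - j + 1 := by
    simp only [mem_Ioc, mem_Icc] at hj hj'
    lia
  have tail_eq_zero : tailProb (δ j) (n - j + 1) = 0 :=
    ((tailProb_antitone (hnn j) (hs j) delay_lt).trans_eq (hbd j)).antisymm
      (tailProb_nonneg (hnn j) _)
  rw [tail_eq_zero, mul_zero]

theorem pendingReward_le {d : ℕ} {B : ℝ} (hf : ∀ j, f j ∈ Set.Icc 0 B)
    (hnn : ∀ j x, 0 ≤ δ j x) (hsum : ∀ j, HasSum (δ j) 1)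
    (hbd : ∀ j, tailProb (δ j) (d + 1) = 0) (n : ℕ) : pendingReward f δ n ≤ d * B := by
  have hB : 0 ≤ B := (hf 0).1.trans (hf 0).2
  have tail_le_one (j s : ℕ) : tailProb (δ j) s ≤ 1 :=
    (tailProb_le_tsum (hnn j) (hsum j).summable s).trans_eq (hsum j).tsum_eq
  calc pendingReward f δ n
      = ∑ j ∈ Ioc (n - d) n, f j * tailProb (δ j) (n - j + 1) :=
        pendingReward_eq_sum_Ioc hnn (fun j => (hsum j).summable) hbd n
    _ ≤ ∑ _j ∈ Ioc (n - d) n, B := sum_le_sum fun j _ =>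
        (mul_le_of_le_one_right (hf j).1 (tail_le_one j _)).trans (hf j).2
    _ = (n - (n - d) : ℕ) * B := by rw [sum_const, Nat.card_Ioc, nsmul_eq_mul]
    _ ≤ d * B := by gcongr; lia

end PendingReward

theorem bounded_delay_window_error_general {d : ℕ} {B : ℝ}
    {f : ℕ → ℝ} (hf : ∀ j, f j ∈ Set.Icc 0 B)
    {δ : ℕ → ℕ → ℝ} (hnn : ∀ j x, 0 ≤ δ j x) (hsum : ∀ j, HasSum (δ j) 1)
    (hbd : ∀ j, tailProb (δ j) (d + 1) = 0)
    {x : ℕ → ℝ} (hx : ∀ t, x t = ∑ j ∈ Icc 1 t, f j * δ j (t - j))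
    {a b : ℕ} (ha : 1 ≤ a) (hab : a ≤ b) :
    |∑ t ∈ Icc a b, x t - ∑ t ∈ Icc a b, f t| ≤ d * B := by
  obtain rfl : x = compositeObservation f δ := funext hx
  obtain ⟨k, rfl⟩ := Nat.exists_eq_add_of_le' ha
  have pending_nonneg := pendingReward_nonneg (fun j => (hf j).1) hnn
  have pending_le := pendingReward_le hf hnn hsum hbd
  rw [Icc_add_one_left_eq_Ioc, sum_Ioc_compositeObservation_sub_sum hsum (by lia)]
  exact abs_sub_le_of_nonneg_of_le (pending_nonneg k) (pending_le k) (pending_nonneg b)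
    (pending_le b)

/-- With delays uniformly bounded by `d`, the total delayed composite observation over any
window of `m` consecutive time steps differs from the total reward by at most `2d`. -/
theorem bounded_delay_window_error (d : ℕ)
    (f : ℕ → ℝ) (hf : ∀ j, f j ∈ Set.Icc (0 : ℝ) 1)
    (δ : ℕ → ℕ → ℝ) (hnn : ∀ j x, 0 ≤ δ j x) (hsum : ∀ j, HasSum (δ j) 1)
    (hbd : ∀ j, tailProb (δ j) (d + 1) = 0)
    (x : ℕ → ℝ) (hx : ∀ t : ℕ, x t = ∑ j ∈ Finset.Icc 1 t, f j * δ j (t - j))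
    (a m : ℕ) (ha : 1 ≤ a) (hm : 1 ≤ m) (b : ℕ) (hb : b = a + m - 1) :
    |∑ t ∈ Finset.Icc a b, x t - ∑ t ∈ Finset.Icc a b, f t| ≤ 2 * (d : ℝ) := by
  have error_le := bounded_delay_window_error_general hf hnn hsum hbd hx ha (b := b) (by lia)
  linarith [Nat.cast_nonneg (α := ℝ) d]
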